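/- Fix γ ∈ (0,1) and θ ∈ (0,1), and define J : (0,1) → ℝ by J(π) = (1−θ)·log((1−θ)/(1−π)) + θ·log(θ/π) + log(1 + (γ−1)(1−π)). Then the point π* = γθ/(1 + θ(γ−1)) satisfies 0 < π* < 1, π* is the unique critical point of J on (0,1) (the unique π with J′(π) = 0), and J attains its global minimum over (0,1) at π*, i.e., J(π*) ≤ J(π) for all π ∈ (0,1). -/

import Mathlib

open Set

/-!
In the coordinate `q = π / (1 + (γ - 1) * (1 - π))`, the Bernoulli parameter whose odds are `γ⁻¹`
times those of `π`, the objective is `KL(Bernoulli θ ‖ Bernoulli q)` up to an additive constant.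
Hence both the critical point and the minimum are at `q = θ`, where the odds of `π` are `γ` times
those of `θ`.
-/

section BernoulliKL

variable {θ q : ℝ}

/-- The Kullback–Leibler divergence `KL(Bernoulli θ ‖ Bernoulli q)`, as a real-valued formula that
is meaningful for `θ ∈ [0, 1]` and `q ∈ (0, 1)`. -/
noncomputable def bernoulliKL (θ q : ℝ) : ℝ :=
  (1 - θ) * Real.log ((1 - θ) / (1 - q)) + θ * Real.log (θ / q)

theorem bernoulliKL_self (θ : ℝ) : bernoulliKL θ θ = 0 := by
  simp [bernoulliKL]

theorem bernoulliKL_eq_klFun (θ : ℝ) (hq₀ : q ≠ 0) (hq₁ : 1 - q ≠ 0) :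
    bernoulliKL θ q = (1 - q) * InformationTheory.klFun ((1 - θ) / (1 - q))
      + q * InformationTheory.klFun (θ / q) := by
  simp only [bernoulliKL, InformationTheory.klFun]
  field_simp
  ring

theorem bernoulliKL_nonneg (hθ : θ ∈ Icc (0 : ℝ) 1) (hq : q ∈ Ioo (0 : ℝ) 1) :
    0 ≤ bernoulliKL θ q := by
  have hq₁ : 0 < 1 - q := sub_pos.2 hq.2
  rw [bernoulliKL_eq_klFun θ hq.1.ne' hq₁.ne']
  exact add_nonneg
    (mul_nonneg hq₁.le <|
      InformationTheory.klFun_nonneg <| div_nonneg (sub_nonneg.2 hθ.2) hq₁.le)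
    (mul_nonneg hq.1.le <| InformationTheory.klFun_nonneg <| div_nonneg hθ.1 hq.1.le)

theorem bernoulliKL_eq_crossEntropy_sub_binEntropy (θ : ℝ) (hq₀ : q ≠ 0) (hq₁ : 1 - q ≠ 0) :
    bernoulliKL θ q
      = -((1 - θ) * Real.log (1 - q) + θ * Real.log q) - Real.binEntropy θ := by
  have mul_log_div (x : ℝ) {y : ℝ} (hy : y ≠ 0) :
      x * Real.log (x / y) = x * Real.log x - x * Real.log y := by
    rcases eq_or_ne x 0 with rfl | hx
    · simp
    · rw [Real.log_div hx hy, mul_sub]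
  rw [bernoulliKL, mul_log_div _ hq₁, mul_log_div _ hq₀, Real.binEntropy, Real.log_inv,
    Real.log_inv]
  ring

theorem hasDerivAt_bernoulliKL (θ : ℝ) (hq₀ : q ≠ 0) (hq₁ : 1 - q ≠ 0) :
    HasDerivAt (bernoulliKL θ) ((q - θ) / (q * (1 - q))) q := by
  have hlog_one_sub : HasDerivAt (fun x : ℝ ↦ Real.log (1 - x)) (-1 / (1 - q)) q :=
    ((hasDerivAt_id q).const_sub 1).log hq₁
  have hcross := (((hlog_one_sub.const_mul (1 - θ)).add
    ((Real.hasDerivAt_log hq₀).const_mul θ)).neg).sub_const (Real.binEntropy θ)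
  refine (hcross.congr_of_eventuallyEq ?_).congr_deriv ?_
  · filter_upwards [isOpen_ne.mem_nhds hq₀, isOpen_ne.mem_nhds (sub_ne_zero.1 hq₁).symm]
      with x hx₀ hx₁
    exact bernoulliKL_eq_crossEntropy_sub_binEntropy θ hx₀ (sub_ne_zero.2 hx₁.symm)
  · field_simp
    ring

end BernoulliKL

section OddsScale

variable {c p : ℝ}

/-- The Bernoulli parameter whose odds are `c` times those of `p`, where the odds of `p` are
`p / (1 - p)`; cleared of denominators, it is also defined at `p = 1`. -/
noncomputable def oddsScale (c p : ℝ) : ℝ :=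
  c * p / (1 + p * (c - 1))

theorem oddsScale_denom_pos (hc : 0 < c) (hp : p ∈ Icc (0 : ℝ) 1) : 0 < 1 + p * (c - 1) := by
  rcases hp.1.eq_or_lt with rfl | hp₀
  · simp
  · linarith [mul_pos hp₀ hc, hp.2]

theorem one_sub_oddsScale (hE : 1 + p * (c - 1) ≠ 0) :
    1 - oddsScale c p = (1 - p) / (1 + p * (c - 1)) := by
  rw [oddsScale, one_sub_div hE]
  ring

theorem oddsScale_mem_Ioo (hc : 0 < c) (hp : p ∈ Ioo (0 : ℝ) 1) :
    oddsScale c p ∈ Ioo (0 : ℝ) 1 := by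
  have hE := oddsScale_denom_pos hc (Ioo_subset_Icc_self hp)
  refine ⟨div_pos (mul_pos hc hp.1) hE, sub_pos.1 ?_⟩
  rw [one_sub_oddsScale hE.ne']
  exact div_pos (sub_pos.2 hp.2) hE

theorem oddsScale_inv_oddsScale (hc : c ≠ 0) (hE : 1 + p * (c - 1) ≠ 0) :
    oddsScale c⁻¹ (oddsScale c p) = p := by
  have houter : 1 + oddsScale c p * (c⁻¹ - 1) = 1 / (1 + p * (c - 1)) := by
    rw [oddsScale]
    field_simp
    ring
  rw [oddsScale, houter, oddsScale]
  field_simp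

theorem oddsScale_inv_eq_iff {q : ℝ} (hc : 0 < c) (hp : p ∈ Icc (0 : ℝ) 1)
    (hq : q ∈ Icc (0 : ℝ) 1) : oddsScale c⁻¹ p = q ↔ p = oddsScale c q := by
  constructor
  · rintro rfl
    have hc' := inv_pos.2 hc
    simpa only [inv_inv] using
      (oddsScale_inv_oddsScale hc'.ne' (oddsScale_denom_pos hc' hp).ne').symm
  · rintro rfl
    exact oddsScale_inv_oddsScale hc.ne' (oddsScale_denom_pos hc hq).ne'

theorem hasDerivAt_oddsScale (hE : 1 + p * (c - 1) ≠ 0) :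
    HasDerivAt (oddsScale c) (c / (1 + p * (c - 1)) ^ 2) p := by
  have hnum : HasDerivAt (fun x : ℝ ↦ c * x) c p := by
    simpa using (hasDerivAt_id p).const_mul c
  have hden : HasDerivAt (fun x : ℝ ↦ 1 + x * (c - 1)) (c - 1) p := by
    simpa using ((hasDerivAt_id p).mul_const (c - 1)).const_add 1
  refine (hnum.div hden hE).congr_deriv ?_
  ring

end OddsScale

section BernoulliKLOddsScale

variable {c p : ℝ}

theorem bernoulliKL_oddsScale (θ : ℝ) (hc : 0 < c) (hp : p ∈ Ioo (0 : ℝ) 1) :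
    bernoulliKL θ (oddsScale c p)
      = bernoulliKL θ p + Real.log (1 + p * (c - 1)) - θ * Real.log c := by
  have hE := (oddsScale_denom_pos hc (Ioo_subset_Icc_self hp)).ne'
  have hp₀ := hp.1.ne'
  have hp₁ := (sub_pos.2 hp.2).ne'
  have hs := oddsScale_mem_Ioo hc hp
  have hlog : Real.log (oddsScale c p)
      = Real.log c + Real.log p - Real.log (1 + p * (c - 1)) := by
    rw [oddsScale, Real.log_div (mul_ne_zero hc.ne' hp₀) hE, Real.log_mul hc.ne' hp₀]
  have hlog_one_sub : Real.log (1 - oddsScale c p)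
      = Real.log (1 - p) - Real.log (1 + p * (c - 1)) := by
    rw [one_sub_oddsScale hE, Real.log_div hp₁ hE]
  rw [bernoulliKL_eq_crossEntropy_sub_binEntropy θ hs.1.ne' (sub_pos.2 hs.2).ne',
    bernoulliKL_eq_crossEntropy_sub_binEntropy θ hp₀ hp₁, hlog, hlog_one_sub]
  ring

theorem hasDerivAt_bernoulliKL_oddsScale (θ : ℝ) (hc : 0 < c) (hp : p ∈ Ioo (0 : ℝ) 1) :
    HasDerivAt (fun x ↦ bernoulliKL θ (oddsScale c x))
      ((oddsScale c p - θ) / (p * (1 - p))) p := by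
  have hE := (oddsScale_denom_pos hc (Ioo_subset_Icc_self hp)).ne'
  have hs := oddsScale_mem_Ioo hc hp
  have hvariance : oddsScale c p * (1 - oddsScale c p)
      = p * (1 - p) * (c / (1 + p * (c - 1)) ^ 2) := by
    rw [one_sub_oddsScale hE, oddsScale, div_mul_div_comm, ← sq]
    ring
  have hchain := (hasDerivAt_bernoulliKL θ hs.1.ne' (sub_pos.2 hs.2).ne').comp p
    (hasDerivAt_oddsScale hE)
  refine hchain.congr_deriv ?_
  rw [hvariance, div_mul_eq_mul_div,
    mul_div_mul_right _ _ (div_ne_zero hc.ne' (pow_ne_zero 2 hE))]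

end BernoulliKLOddsScale

section FlatteningObjective

variable {γ θ p : ℝ}

/-- The sum of `KL(Bernoulli θ ‖ Bernoulli p)` and the negative log-density at `p` of the flattening
hyper-prior with parameter `γ`, without the normalizing constant of that density. -/
noncomputable def flatteningObjective (γ θ p : ℝ) : ℝ :=
  bernoulliKL θ p + Real.log (1 + (γ - 1) * (1 - p))

theorem flatteningObjective_eq_bernoulliKL_oddsScale (θ : ℝ) (hγ : 0 < γ)
    (hp : p ∈ Ioo (0 : ℝ) 1) :
    flatteningObjective γ θ p
      = bernoulliKL θ (oddsScale γ⁻¹ p) + (1 - θ) * Real.log γ := by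
  have hE := oddsScale_denom_pos (inv_pos.2 hγ) (Ioo_subset_Icc_self hp)
  have hdenom : 1 + (γ - 1) * (1 - p) = γ * (1 + p * (γ⁻¹ - 1)) := by
    field_simp
    ring
  rw [flatteningObjective, hdenom, Real.log_mul hγ.ne' hE.ne',
    bernoulliKL_oddsScale θ (inv_pos.2 hγ) hp, Real.log_inv]
  ring

theorem hasDerivAt_flatteningObjective (θ : ℝ) (hγ : 0 < γ) (hp : p ∈ Ioo (0 : ℝ) 1) :
    HasDerivAt (flatteningObjective γ θ) ((oddsScale γ⁻¹ p - θ) / (p * (1 - p))) p := by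
  refine ((hasDerivAt_bernoulliKL_oddsScale θ (inv_pos.2 hγ) hp).add_const
    ((1 - θ) * Real.log γ)).congr_of_eventuallyEq ?_
  filter_upwards [isOpen_Ioo.mem_nhds hp] with x hx
  exact flatteningObjective_eq_bernoulliKL_oddsScale θ hγ hx

theorem deriv_flatteningObjective_eq_zero_iff (hγ : 0 < γ) (hθ : θ ∈ Icc (0 : ℝ) 1)
    (hp : p ∈ Ioo (0 : ℝ) 1) :
    deriv (flatteningObjective γ θ) p = 0 ↔ p = oddsScale γ θ := by
  have hvariance : p * (1 - p) ≠ 0 := (mul_pos hp.1 (sub_pos.2 hp.2)).ne'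
  rw [(hasDerivAt_flatteningObjective θ hγ hp).deriv, div_eq_zero_iff,
    or_iff_left hvariance, sub_eq_zero, oddsScale_inv_eq_iff hγ (Ioo_subset_Icc_self hp) hθ]

theorem flatteningObjective_oddsScale_le (hγ : 0 < γ) (hθ : θ ∈ Ioo (0 : ℝ) 1)
    (hp : p ∈ Ioo (0 : ℝ) 1) :
    flatteningObjective γ θ (oddsScale γ θ) ≤ flatteningObjective γ θ p := by
  have hθ' := Ioo_subset_Icc_self hθ
  rw [flatteningObjective_eq_bernoulliKL_oddsScale θ hγ (oddsScale_mem_Ioo hγ hθ),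
    flatteningObjective_eq_bernoulliKL_oddsScale θ hγ hp,
    oddsScale_inv_oddsScale hγ.ne' (oddsScale_denom_pos hγ hθ').ne', bernoulliKL_self]
  gcongr
  exact bernoulliKL_nonneg hθ' (oddsScale_mem_Ioo (inv_pos.2 hγ) hp)

end FlatteningObjective

theorem flattening_hyperprior_minimizer_general (γ θ : ℝ) (hγ : 0 < γ)
    (hθ : θ ∈ Ioo (0 : ℝ) 1)
    (J : ℝ → ℝ)
    (hJ : ∀ π : ℝ, J π = (1 - θ) * Real.log ((1 - θ) / (1 - π))
      + θ * Real.log (θ / π) + Real.log (1 + (γ - 1) * (1 - π)))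
    (πs : ℝ) (hπs : πs = γ * θ / (1 + θ * (γ - 1))) :
    0 < πs ∧ πs < 1 ∧ HasDerivAt J 0 πs ∧
      (∀ π ∈ Ioo (0 : ℝ) 1, deriv J π = 0 → π = πs) ∧
      (∀ π ∈ Ioo (0 : ℝ) 1, J πs ≤ J π) := by
  obtain rfl : J = flatteningObjective γ θ := funext hJ
  obtain rfl : πs = oddsScale γ θ := hπs
  have hθ' := Ioo_subset_Icc_self hθ
  have hs := oddsScale_mem_Ioo hγ hθ
  have hcritical : HasDerivAt (flatteningObjective γ θ) 0 (oddsScale γ θ) := by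
    rw [← (deriv_flatteningObjective_eq_zero_iff hγ hθ' hs).2 rfl]
    exact (hasDerivAt_flatteningObjective θ hγ hs).differentiableAt.hasDerivAt
  exact ⟨hs.1, hs.2, hcritical,
    fun _ hπ ↦ (deriv_flatteningObjective_eq_zero_iff hγ hθ' hπ).1,
    fun _ hπ ↦ flatteningObjective_oddsScale_le hγ hθ hπ⟩

/-- For `γ, θ ∈ (0,1)` and
`J(π) = (1−θ)·log((1−θ)/(1−π)) + θ·log(θ/π) + log(1 + (γ−1)(1−π))`,
the point `π* = γθ/(1 + θ(γ−1))` lies in `(0,1)`, is the unique critical point of `J`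
on `(0,1)`, and is a global minimizer of `J` over `(0,1)`. -/
theorem flattening_hyperprior_minimizer (γ θ : ℝ) (hγ : γ ∈ Ioo (0 : ℝ) 1)
    (hθ : θ ∈ Ioo (0 : ℝ) 1)
    (J : ℝ → ℝ)
    (hJ : ∀ π : ℝ, J π = (1 - θ) * Real.log ((1 - θ) / (1 - π))
      + θ * Real.log (θ / π) + Real.log (1 + (γ - 1) * (1 - π)))
    (πs : ℝ) (hπs : πs = γ * θ / (1 + θ * (γ - 1))) :
    0 < πs ∧ πs < 1 ∧ HasDerivAt J 0 πs ∧
      (∀ π ∈ Ioo (0 : ℝ) 1, deriv J π = 0 → π = πs) ∧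
      (∀ π ∈ Ioo (0 : ℝ) 1, J πs ≤ J π) :=
  flattening_hyperprior_minimizer_general γ θ hγ.1 hθ J hJ πs hπs
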